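/- arXiv:2601.15258 — 4 statements merged into one kernel-verified Lean document; each statement's English description precedes it below -/
import Mathlib

section
/- For any number of groups m ≥ 2 and any parameters θ, ℓ, r ∈ (0,1] with ⌈ℓm⌉ < ⌈rm⌉, the mechanism M_m(θ,ℓ,r) for k = 2 facilities is strategyproof, both in the sum-variant and in the max-variant. -/
open Finset

noncomputable section

/-- A distributed facility location setting for `k` facilities and `m` groups:
`n ≥ 2` agents on the real line, partitioned into `m ≥ k` disjoint nonempty groups. -/
structure FLSetting (k m : ℕ) where
  n : ℕ
  hn : 2 ≤ n
  hmk : k ≤ m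
  grp : Fin n → Fin m
  surj : Function.Surjective grp

/-- A two-phase mechanism for `k` facilities: for each number `m` of groups, a
representative function on finite multisets of reals, and a selection function
producing the `k` facility locations from the multiset of representatives. -/
structure TwoPhase (k : ℕ) where
  rep : ℕ → Multiset ℝ → ℝ
  sel : ℕ → Multiset ℝ → Fin k → ℝ

/-- Validity of a two-phase mechanism: the representative of a nonempty multiset
is one of its elements, and the selected facility locations form a sub-multiset
of the representatives. -/
def TwoPhase.Valid {k : ℕ} (M : TwoPhase k) : Prop :=
  (∀ (m : ℕ) (S : Multiset ℝ), S ≠ 0 → M.rep m S ∈ S) ∧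
  (∀ (m : ℕ) (R : Multiset ℝ), Multiset.card R = m → k ≤ m →
    (↑(List.ofFn (M.sel m R)) : Multiset ℝ) ≤ R)

/-- The multiset of (reported) positions of the agents in group `j`. -/
def groupMS {k m : ℕ} (S : FLSetting k m) (x : Fin S.n → ℝ) (j : Fin m) : Multiset ℝ :=
  (Finset.univ.filter (fun i => S.grp i = j)).val.map x

/-- The number of agents in group `j`. -/
def groupSize {k m : ℕ} (S : FLSetting k m) (j : Fin m) : ℕ :=
  (Finset.univ.filter (fun i => S.grp i = j)).card

/-- The multiset of the `m` group representatives. -/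
def repsMS {k m : ℕ} (M : TwoPhase k) (S : FLSetting k m) (x : Fin S.n → ℝ) : Multiset ℝ :=
  (Finset.univ.val.map fun j : Fin m => M.rep m (groupMS S x j))

/-- The facility locations output by mechanism `M` on reported positions `x`. -/
def outcome {k m : ℕ} (M : TwoPhase k) (S : FLSetting k m) (x : Fin S.n → ℝ) : Fin k → ℝ :=
  M.sel m (repsMS M S x)

/-- Sum-variant individual cost: total distance to all facilities. -/
def sumCost (k : ℕ) (xi : ℝ) (y : Fin k → ℝ) : ℝ := ∑ ℓ, |xi - y ℓ|

/-- Max-variant individual cost: distance to the farthest facility. -/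
def maxCost (k : ℕ) (xi : ℝ) (y : Fin k → ℝ) : ℝ := ⨆ ℓ, |xi - y ℓ|

/-- Social cost: average over groups of the average individual cost within the group. -/
def SC {k m : ℕ} (cost : ℝ → (Fin k → ℝ) → ℝ) (S : FLSetting k m) (x : Fin S.n → ℝ)
    (y : Fin k → ℝ) : ℝ :=
  (1 / (m : ℝ)) * ∑ j : Fin m,
    (1 / (groupSize S j : ℝ)) *
      ∑ i ∈ Finset.univ.filter (fun i => S.grp i = j), cost (x i) y

/-- A feasible solution opens the `k` facilities at the positions of `k` distinct agents. -/
def Feasible {k m : ℕ} (S : FLSetting k m) (x : Fin S.n → ℝ) (y : Fin k → ℝ) : Prop :=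
  ∃ f : Fin k → Fin S.n, Function.Injective f ∧ ∀ ℓ, y ℓ = x (f ℓ)

/-- Strategyproofness with respect to an individual cost function. -/
def Strategyproof {k : ℕ} (cost : ℝ → (Fin k → ℝ) → ℝ) (M : TwoPhase k) : Prop :=
  ∀ (m : ℕ) (S : FLSetting k m) (x : Fin S.n → ℝ) (i : Fin S.n) (x' : ℝ),
    cost (x i) (outcome M S x) ≤ cost (x i) (outcome M S (Function.update x i x'))

/-- Strategyproofness restricted to instances with exactly `m` groups. -/
def StrategyproofOn {k : ℕ} (cost : ℝ → (Fin k → ℝ) → ℝ) (M : TwoPhase k) (m : ℕ) : Prop :=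
  ∀ (S : FLSetting k m) (x : Fin S.n → ℝ) (i : Fin S.n) (x' : ℝ),
    cost (x i) (outcome M S x) ≤ cost (x i) (outcome M S (Function.update x i x'))

/-- The `t`-th leftmost element of a multiset of reals (1-indexed). -/
def kthLeftmost (S : Multiset ℝ) (t : ℕ) : ℝ := (S.sort (· ≤ ·)).getD (t - 1) 0

/-- The mechanism `M_m(θ, ℓ, r)` for two facilities: each group's representative is the
position of its `⌈θ·n_g⌉`-th leftmost agent, and the facilities are opened at the
`⌈ℓm⌉`-th and `⌈rm⌉`-th leftmost representative locations. -/
def Mmech (θ l r : ℝ) : TwoPhase 2 where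
  rep := fun _ S => kthLeftmost S ⌈θ * (Multiset.card S : ℝ)⌉₊
  sel := fun m R => ![kthLeftmost R ⌈l * (m : ℝ)⌉₊, kthLeftmost R ⌈r * (m : ℝ)⌉₊]


/-- Moving from `u` to `v` goes away from `p`: leftwards if `u < p`, rightwards if `p < u`.
Stated through lower level sets, so that it passes to order statistics. -/
def MovesAway (p u v : ℝ) : Prop :=
  ∀ a, (a < p → u ≤ a → v ≤ a) ∧ (p ≤ a → v ≤ a → u ≤ a)

theorem MovesAway.refl (p u : ℝ) : MovesAway p u u := fun _ => ⟨fun _ h => h, fun _ h => h⟩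

theorem MovesAway.self (p v : ℝ) : MovesAway p p v :=
  fun _ => ⟨fun h h' => absurd h' h.not_ge, fun h _ => h⟩

theorem MovesAway.abs_le {p u v : ℝ} (h : MovesAway p u v) : |p - u| ≤ |p - v| := by
  rcases lt_trichotomy u p with hu | rfl | hu
  · have := (h u).1 hu le_rfl
    rw [abs_of_pos (by linarith), abs_of_pos (by linarith)]
    linarith
  · simp
  · have : u ≤ v := by
      by_contra! hv
      exact (max_lt hu hv).not_ge ((h (max p v)).2 (le_max_left _ _) (le_max_right _ _))
    rw [abs_of_neg (by linarith), abs_of_neg (by linarith)]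
    linarith

theorem List.Pairwise.getElem_le_iff_lt_countP {l : List ℝ} (hl : l.Pairwise (· ≤ ·)) (a : ℝ)
    (q : ℕ) (hq : q < l.length) : l[q] ≤ a ↔ q < l.countP (· ≤ a) := by
  induction l generalizing q with
  | nil => simp at hq
  | cons b l ih =>
    obtain ⟨hb, hl⟩ := List.pairwise_cons.1 hl
    by_cases hba : b ≤ a
    · cases q with
      | zero => simp [hba]
      | succ q => simpa [List.countP_cons, hba] using ih hl q (by simpa using hq)
    · have hzero : (b :: l).countP (· ≤ a) = 0 := by
        simp only [List.countP_eq_zero, List.mem_cons, decide_eq_true_eq]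
        rintro c (rfl | hc)
        · exact hba
        · exact fun h => hba ((hb c hc).trans h)
      have hlt : ¬ (b :: l)[q] ≤ a := by
        cases q with
        | zero => simpa using hba
        | succ q => exact fun h => hba ((hb _ (List.getElem_mem (by simpa using hq))).trans h)
      simp only [hzero, hlt, Nat.not_lt_zero]

theorem kthLeftmost_of_card_le {S : Multiset ℝ} {t : ℕ} (h : Multiset.card S ≤ t - 1) :
    kthLeftmost S t = 0 := by
  rw [kthLeftmost, List.getD_eq_default _ _ (by simpa using h)]

theorem kthLeftmost_le_iff {ι : Type*} (s : Finset ι) (f : ι → ℝ) {t : ℕ} (h : t - 1 < #s)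
    (a : ℝ) : kthLeftmost (s.val.map f) t ≤ a ↔ t - 1 < #{i ∈ s | f i ≤ a} := by
  have hcount : ((s.val.map f).sort (· ≤ ·)).countP (· ≤ a) = #{i ∈ s | f i ≤ a} := by
    rw [← Multiset.coe_countP, Multiset.sort_eq, Multiset.countP_map]
    rfl
  rw [kthLeftmost, List.getD_eq_getElem _ _ (by simpa using h),
    (Multiset.pairwise_sort (s.val.map f) (· ≤ ·)).getElem_le_iff_lt_countP, hcount]

theorem MovesAway.kthLeftmost {ι : Type*} (s : Finset ι) {f g : ι → ℝ} {p : ℝ}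
    (h : ∀ i, MovesAway p (f i) (g i)) (t : ℕ) :
    MovesAway p (kthLeftmost (s.val.map f) t) (kthLeftmost (s.val.map g) t) := by
  rcases lt_or_ge (t - 1) #s with ht | ht
  · intro a
    rw [kthLeftmost_le_iff s f ht, kthLeftmost_le_iff s g ht]
    exact ⟨fun ha hf => hf.trans_le (card_le_card (monotone_filter_right s fun i _ => (h i a).1 ha)),
      fun ha hg => hg.trans_le (card_le_card (monotone_filter_right s fun i _ => (h i a).2 ha))⟩
  · rw [kthLeftmost_of_card_le (by simpa using ht), kthLeftmost_of_card_le (by simpa using ht)]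
    exact .refl p 0

theorem abs_sub_outcome_Mmech_le {m : ℕ} (θ l r : ℝ) (S : FLSetting 2 m) (x : Fin S.n → ℝ)
    (i : Fin S.n) (x' : ℝ) (q : Fin 2) :
    |x i - outcome (Mmech θ l r) S x q| ≤
      |x i - outcome (Mmech θ l r) S (Function.update x i x') q| := by
  have hagent : ∀ k, MovesAway (x i) (x k) (Function.update x i x' k) := by
    intro k
    rcases eq_or_ne k i with rfl | hk
    · exact .self _ _
    · rw [Function.update_of_ne hk]
      exact .refl _ _
  have hrep : ∀ j : Fin m, MovesAway (x i) ((Mmech θ l r).rep m (groupMS S x j))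
      ((Mmech θ l r).rep m (groupMS S (Function.update x i x') j)) := by
    intro j
    simp only [Mmech, groupMS, Multiset.card_map]
    exact .kthLeftmost _ hagent _
  apply MovesAway.abs_le
  fin_cases q
  · exact .kthLeftmost univ hrep _
  · exact .kthLeftmost univ hrep _

/-- For any `m ≥ 2` and `θ, ℓ, r ∈ (0,1]` with `⌈ℓm⌉ < ⌈rm⌉`, the mechanism
`M_m(θ,ℓ,r)` for two facilities is strategyproof in both the sum- and the max-variant. -/
theorem stmt0 (m : ℕ) (hm : 2 ≤ m) (θ l r : ℝ)
    (hθ : θ ∈ Set.Ioc (0 : ℝ) 1) (hl : l ∈ Set.Ioc (0 : ℝ) 1) (hr : r ∈ Set.Ioc (0 : ℝ) 1)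
    (hlr : ⌈l * (m : ℝ)⌉₊ < ⌈r * (m : ℝ)⌉₊) :
    StrategyproofOn (sumCost 2) (Mmech θ l r) m ∧
    StrategyproofOn (maxCost 2) (Mmech θ l r) m := by
  refine ⟨fun S x i x' => ?_, fun S x i x' => ?_⟩
  · exact Finset.sum_le_sum fun q _ => abs_sub_outcome_Mmech_le θ l r S x i x' q
  · exact ciSup_mono (Set.finite_range _).bddAbove
      fun q => abs_sub_outcome_Mmech_le θ l r S x i x' q

end
end

section
/- For any instance I with m groups and any parameters θ, ℓ, r ∈ (0,1] with ⌈ℓm⌉ < ⌈rm⌉, there exists an instance J with m groups all of the same size such that, for each group index j, the representative location chosen by mechanism M_m(θ,ℓ,r) for the j-th group is the same in I and in J, and the position of the weighted median agent in I equals the position of the median agent in J. -/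
open Finset

noncomputable section

/-- The weight of an agent: one over the size of her group. -/
def agentWeight {k m : ℕ} (S : FLSetting k m) (i : Fin S.n) : ℝ :=
  1 / (groupSize S (S.grp i) : ℝ)

/-- `i✶` is a weighted median agent: for some ranking of the agents by position
(ties broken arbitrarily), the total weight of the agents strictly before `i✶`
is less than `m/2`, and together with the weight of `i✶` it is at least `m/2`. -/
def IsWeightedMedian {k m : ℕ} (S : FLSetting k m) (x : Fin S.n → ℝ) (istar : Fin S.n) : Prop :=
  ∃ σ : Equiv.Perm (Fin S.n), Monotone (x ∘ σ) ∧ ∃ t : Fin S.n, σ t = istar ∧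
    (∑ j ∈ Finset.univ.filter (fun j => j < t), agentWeight S (σ j)) < (m : ℝ) / 2 ∧
    (m : ℝ) / 2 ≤ agentWeight S istar + ∑ j ∈ Finset.univ.filter (fun j => j < t), agentWeight S (σ j)

/-- The `t`-th leftmost element `y` has fewer than `t` elements strictly to its left, and at
least `t` elements weakly to its left. -/
lemma kthLeftmost_spec (G : Multiset ℝ) (t : ℕ) (h₁ : 1 ≤ t) (h₂ : t ≤ Multiset.card G) :
    G.countP (· < kthLeftmost G t) < t ∧ t ≤ G.countP (· ≤ kthLeftmost G t) := by
  obtain ⟨p, rfl⟩ : ∃ p, t = p + 1 := ⟨t - 1, by omega⟩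
  set L := G.sort (· ≤ ·) with hL
  have hG : G = (L : Multiset ℝ) := (Multiset.sort_eq G _).symm
  have hp : p < L.length := by rw [hL, Multiset.length_sort]; omega
  have hy : kthLeftmost G (p + 1) = L[p] := by
    simp [kthLeftmost, ← hL, List.getElem?_eq_getElem hp]
  have hsplit : L = L.take p ++ L[p] :: L.drop (p + 1) := by
    rw [← List.drop_eq_getElem_cons hp, List.take_append_drop]
  have hsorted : L.Pairwise (· ≤ ·) := Multiset.pairwise_sort G _
  have hlen : (L.take p).length = p := by rw [List.length_take]; omega
  rw [hy]
  generalize L[p] = y at *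
  generalize L.take p = A at *
  generalize L.drop (p + 1) = B at *
  rw [hsplit, List.pairwise_append, List.pairwise_cons] at hsorted
  obtain ⟨-, ⟨hB, -⟩, hAB⟩ := hsorted
  rw [hG, hsplit, Multiset.coe_countP, Multiset.coe_countP, List.countP_append,
    List.countP_append, List.countP_cons, List.countP_cons]
  constructor
  · have hA' := List.countP_le_length (p := fun z => decide (z < y)) (l := A)
    have hB' : B.countP (fun z => decide (z < y)) = 0 := by
      rw [List.countP_eq_zero]
      intro z hz
      simpa using hB z hz
    simp only [lt_irrefl, decide_false, Bool.false_eq_true, if_false]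
    omega
  · have hA' : A.countP (fun z => decide (z ≤ y)) = A.length := by
      rw [List.countP_eq_length]
      intro z hz
      simpa using hAB z hz y (by simp)
    simp only [le_refl, decide_true, if_true]
    omega

/-- Counting the elements satisfying a predicate is monotone in the predicate. -/
lemma countP_mono_of_imp (G : Multiset ℝ) (P Q : ℝ → Prop) [DecidablePred P] [DecidablePred Q]
    (h : ∀ z, P z → Q z) : G.countP P ≤ G.countP Q := by
  rw [Multiset.countP_eq_card_filter, Multiset.countP_eq_card_filter]
  exact Multiset.card_le_card (Multiset.monotone_filter_right G h)

/-- Replicating every element of a multiset `c` times preserves the order statistic of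
relative rank `θ`. -/
lemma kthLeftmost_nsmul (θ : ℝ) (hθ : θ ∈ Set.Ioc (0 : ℝ) 1) (G : Multiset ℝ) (hG : G ≠ 0)
    (c : ℕ) (hc : 0 < c) :
    kthLeftmost (c • G) ⌈θ * (Multiset.card (c • G) : ℝ)⌉₊ =
      kthLeftmost G ⌈θ * (Multiset.card G : ℝ)⌉₊ := by
  have rank_bounds : ∀ H : Multiset ℝ, H ≠ 0 →
      1 ≤ ⌈θ * (Multiset.card H : ℝ)⌉₊ ∧ ⌈θ * (Multiset.card H : ℝ)⌉₊ ≤ Multiset.card H := by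
    intro H hH
    have hpos : (0 : ℝ) < Multiset.card H := by exact_mod_cast Multiset.card_pos.2 hH
    refine ⟨Nat.ceil_pos.2 (mul_pos hθ.1 hpos), Nat.ceil_le.2 ?_⟩
    exact mul_le_of_le_one_left hpos.le hθ.2
  have hcG : c • G ≠ 0 := by
    rw [← Multiset.card_pos, Multiset.card_nsmul]
    exact Nat.mul_pos hc (Multiset.card_pos.2 hG)
  have hcR : (0 : ℝ) < c := by exact_mod_cast hc
  obtain ⟨a₁, a₂⟩ := kthLeftmost_spec _ _ (rank_bounds _ hcG).1 (rank_bounds _ hcG).2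
  obtain ⟨b₁, b₂⟩ := kthLeftmost_spec _ _ (rank_bounds _ hG).1 (rank_bounds _ hG).2
  generalize kthLeftmost (c • G) _ = y at *
  generalize kthLeftmost G _ = z at *
  rw [Nat.lt_ceil] at a₁ b₁
  rw [Nat.ceil_le] at a₂ b₂
  simp only [Multiset.countP_nsmul, Multiset.card_nsmul, Nat.cast_mul] at a₁ a₂
  have a₁' : (G.countP (· < y) : ℝ) < θ * Multiset.card G := by
    refine lt_of_mul_lt_mul_left ?_ hcR.le
    linarith
  have a₂' : θ * Multiset.card G ≤ G.countP (· ≤ y) := by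
    refine le_of_mul_le_mul_left ?_ hcR
    linarith
  rcases lt_trichotomy y z with h | h | h
  · have := countP_mono_of_imp G (· ≤ y) (· < z) fun w hw => lt_of_le_of_lt hw h
    have : (G.countP (· ≤ y) : ℝ) ≤ G.countP (· < z) := by exact_mod_cast this
    linarith
  · exact h
  · have := countP_mono_of_imp G (· ≤ z) (· < y) fun w hw => lt_of_le_of_lt hw h
    have : (G.countP (· ≤ z) : ℝ) ≤ G.countP (· < y) := by exact_mod_cast this
    linarith

/-- The size of a group is the cardinality of its multiset of positions. -/
lemma card_groupMS {k m : ℕ} (S : FLSetting k m) (x : Fin S.n → ℝ) (j : Fin m) :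
    Multiset.card (groupMS S x j) = groupSize S j := by
  rw [groupMS, Multiset.card_map, Finset.card_val, groupSize]

/-- Every group has at least one agent. -/
lemma groupSize_pos {k m : ℕ} (S : FLSetting k m) (j : Fin m) : 0 < groupSize S j := by
  obtain ⟨i, hi⟩ := S.surj j
  exact Finset.card_pos.2 ⟨i, by simpa using hi⟩

/-- Any family of at least two nonempty multisets is the family of group positions of some
instance. -/
lemma exists_groupMS_eq {k m : ℕ} (hkm : k ≤ m) (hm : 2 ≤ m) (G : Fin m → Multiset ℝ)
    (hG : ∀ j, G j ≠ 0) :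
    ∃ (S : FLSetting k m) (x : Fin S.n → ℝ), ∀ j, groupMS S x j = G j := by
  let e := Fintype.equivFin (Σ j : Fin m, Fin (G j).toList.length)
  have hsurj : Function.Surjective fun i => (e.symm i).1 := by
    intro j
    have hj : 0 < (G j).toList.length := by
      rw [Multiset.length_toList]
      exact Multiset.card_pos.2 (hG j)
    exact ⟨e ⟨j, ⟨0, hj⟩⟩, by simp⟩
  have hn : 2 ≤ Fintype.card (Σ j : Fin m, Fin (G j).toList.length) := by
    have := Fintype.card_le_of_surjective _ hsurj
    simp only [Fintype.card_fin] at this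
    omega
  refine ⟨⟨_, hn, hkm, fun i => (e.symm i).1, hsurj⟩,
    fun i => (G (e.symm i).1).toList.get (e.symm i).2, fun j => ?_⟩
  have hfilter : (Finset.univ.filter fun i => (e.symm i).1 = j) =
      Finset.univ.map ((Function.Embedding.sigmaMk j).trans e.toEmbedding) := by
    ext i
    simp only [Finset.mem_filter, Finset.mem_univ, true_and, Finset.mem_map,
      Function.Embedding.trans_apply, Function.Embedding.sigmaMk_apply, Equiv.coe_toEmbedding]
    constructor
    · rintro rfl
      exact ⟨(e.symm i).2, by simp⟩
    · rintro ⟨a, rfl⟩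
      simp
  change Multiset.map _ (Finset.univ.filter fun i => (e.symm i).1 = j).val = _
  rw [hfilter, Finset.map_val, Multiset.map_map]
  have hget : ∀ a : Fin (G j).toList.length,
      (G (e.symm (e ⟨j, a⟩)).1).toList.get (e.symm (e ⟨j, a⟩)).2 = (G j).toList.get a := by
    intro a
    rw [Equiv.symm_apply_apply]
  refine (Multiset.map_congr rfl fun a _ => hget a).trans ?_
  rw [Fin.univ_val_map, List.ofFn_get, Multiset.coe_toList]

/-- The total weight of the agents whose position satisfies a predicate, computed groupwise. -/
lemma sum_agentWeight_filter {k m : ℕ} (S : FLSetting k m) (x : Fin S.n → ℝ) (P : ℝ → Prop)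
    [DecidablePred P] :
    ∑ i ∈ Finset.univ.filter (fun i => P (x i)), agentWeight S i =
      ∑ j, ((groupMS S x j).countP P : ℝ) / (Multiset.card (groupMS S x j) : ℝ) := by
  rw [← Finset.sum_fiberwise _ S.grp]
  refine Finset.sum_congr rfl fun j _ => ?_
  have hconst : ∀ i ∈ (Finset.univ.filter fun i => P (x i)).filter (fun i => S.grp i = j),
      agentWeight S i = 1 / (groupSize S j : ℝ) := by
    intro i hi
    rw [agentWeight, (Finset.mem_filter.1 hi).2]
  rw [Finset.sum_congr rfl hconst, Finset.sum_const, nsmul_eq_mul, mul_one_div, card_groupMS]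
  congr 2
  rw [groupMS, Multiset.countP_map, ← Finset.filter_val, Finset.card_val]
  congr 1
  ext i
  simp [and_comm]

/-- At the position of a weighted median agent, the weight strictly to the left is below `m / 2`
and the weight weakly to the left is at least `m / 2`. -/
lemma IsWeightedMedian.weight_bounds {k m : ℕ} {S : FLSetting k m} {x : Fin S.n → ℝ}
    {i : Fin S.n} (h : IsWeightedMedian S x i) :
    ∑ a ∈ Finset.univ.filter (fun a => x a < x i), agentWeight S a < (m : ℝ) / 2 ∧
      (m : ℝ) / 2 ≤ ∑ a ∈ Finset.univ.filter (fun a => x a ≤ x i), agentWeight S a := by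
  obtain ⟨σ, hσ, t, rfl, hlt, hle⟩ := h
  have hw : ∀ a, 0 ≤ agentWeight S a := fun a => by unfold agentWeight; positivity
  have hperm : ∀ (P : ℝ → Prop) [DecidablePred P],
      ∑ a ∈ Finset.univ.filter (fun a => P (x a)), agentWeight S a =
        ∑ a ∈ Finset.univ.filter (fun a => P (x (σ a))), agentWeight S (σ a) := by
    intro P _
    rw [Finset.sum_filter, Finset.sum_filter]
    exact (Equiv.sum_comp σ fun a => if P (x a) then agentWeight S a else 0).symm
  constructor
  · rw [hperm (· < x (σ t))]
    refine lt_of_le_of_lt (Finset.sum_le_sum_of_subset_of_nonneg ?_ fun a _ _ => hw _) hlt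
    intro a ha
    simp only [Finset.mem_filter, Finset.mem_univ, true_and] at ha ⊢
    by_contra hat
    exact absurd (hσ (not_lt.1 hat)) (not_le.2 ha)
  · rw [hperm (· ≤ x (σ t))]
    refine hle.trans ?_
    rw [← Finset.sum_insert (f := fun a => agentWeight S (σ a)) (a := t) (by simp)]
    refine Finset.sum_le_sum_of_subset_of_nonneg ?_ fun a _ _ => hw _
    intro a ha
    simp only [Finset.mem_insert, Finset.mem_filter, Finset.mem_univ, true_and] at ha ⊢
    exact hσ (ha.elim le_of_eq le_of_lt)

/-- Two instances in which every set of positions carries the same weight have weighted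
medians at the same position. -/
lemma IsWeightedMedian.position_eq {k m : ℕ} {S S' : FLSetting k m} {x : Fin S.n → ℝ}
    {x' : Fin S'.n → ℝ} {i : Fin S.n} {i' : Fin S'.n}
    (hW : ∀ (P : ℝ → Prop) [DecidablePred P],
      ∑ a ∈ Finset.univ.filter (fun a => P (x' a)), agentWeight S' a =
        ∑ a ∈ Finset.univ.filter (fun a => P (x a)), agentWeight S a)
    (h : IsWeightedMedian S x i) (h' : IsWeightedMedian S' x' i') : x i = x' i' := by
  obtain ⟨a₁, a₂⟩ := h.weight_bounds
  obtain ⟨b₁, b₂⟩ := h'.weight_bounds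
  rw [hW (· < x' i')] at b₁
  rw [hW (· ≤ x' i')] at b₂
  have hw : ∀ a, 0 ≤ agentWeight S a := fun a => by unfold agentWeight; positivity
  have hmono : ∀ y z : ℝ, y < z →
      ∑ a ∈ Finset.univ.filter (fun a => x a ≤ y), agentWeight S a ≤
        ∑ a ∈ Finset.univ.filter (fun a => x a < z), agentWeight S a := fun y z hyz =>
    Finset.sum_le_sum_of_subset_of_nonneg
      (Finset.monotone_filter_right _ fun a _ ha => lt_of_le_of_lt ha hyz) fun a _ _ => hw a
  rcases lt_trichotomy (x i) (x' i') with hlt | heq | hgt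
  · linarith [hmono _ _ hlt]
  · exact heq
  · linarith [hmono _ _ hgt]

/-- For any instance with `m` groups, there is an instance with `m` groups all of the
same size in which each group gets the same representative under `M_m(θ,ℓ,r)`, and whose
median agent has the same position as the weighted median agent of the original instance. -/
theorem stmt1 (m : ℕ) (hm : 2 ≤ m) (θ l r : ℝ)
    (hθ : θ ∈ Set.Ioc (0 : ℝ) 1) (hl : l ∈ Set.Ioc (0 : ℝ) 1) (hr : r ∈ Set.Ioc (0 : ℝ) 1)
    (hlr : ⌈l * (m : ℝ)⌉₊ < ⌈r * (m : ℝ)⌉₊)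
    (S : FLSetting 2 m) (x : Fin S.n → ℝ) :
    ∃ (S' : FLSetting 2 m) (x' : Fin S'.n → ℝ),
      (∀ j j' : Fin m, groupSize S' j = groupSize S' j') ∧
      (∀ j : Fin m, (Mmech θ l r).rep m (groupMS S' x' j) = (Mmech θ l r).rep m (groupMS S x j)) ∧
      (∀ (i : Fin S.n) (i' : Fin S'.n),
        IsWeightedMedian S x i → IsWeightedMedian S' x' i' → x i = x' i') := by
  have hdvd : ∀ j, groupSize S j ∣ ∏ j, groupSize S j := fun j =>
    Finset.dvd_prod_of_mem _ (Finset.mem_univ j)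
  have hprod : 0 < ∏ j, groupSize S j := Finset.prod_pos fun j _ => groupSize_pos S j
  let c : Fin m → ℕ := fun j => (∏ j, groupSize S j) / groupSize S j
  have hc : ∀ j, 0 < c j := fun j =>
    Nat.div_pos (Nat.le_of_dvd hprod (hdvd j)) (groupSize_pos S j)
  have hne : ∀ j, groupMS S x j ≠ 0 := fun j => by
    rw [← Multiset.card_pos, card_groupMS]
    exact groupSize_pos S j
  obtain ⟨S', x', hS'⟩ := exists_groupMS_eq (k := 2) hm hm (fun j => c j • groupMS S x j)
    fun j => by
      rw [← Multiset.card_pos, Multiset.card_nsmul]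
      exact Nat.mul_pos (hc j) (Multiset.card_pos.2 (hne j))
  have hsize : ∀ j, groupSize S' j = ∏ j, groupSize S j := fun j => by
    rw [← card_groupMS S' x', hS', Multiset.card_nsmul, card_groupMS]
    exact Nat.div_mul_cancel (hdvd j)
  refine ⟨S', x', fun j j' => by rw [hsize, hsize], fun j => ?_, fun i i' h h' => ?_⟩
  · rw [hS']
    exact kthLeftmost_nsmul θ hθ _ (hne j) _ (hc j)
  · refine IsWeightedMedian.position_eq (fun P _ => ?_) h h'
    rw [sum_agentWeight_filter, sum_agentWeight_filter]
    refine Finset.sum_congr rfl fun j _ => ?_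
    rw [hS', Multiset.countP_nsmul, Multiset.card_nsmul, Nat.cast_mul, Nat.cast_mul]
    exact mul_div_mul_left _ _ (by exact_mod_cast (hc j).ne')

end
end

section
/- Let Y = 1 in the sum-variant and Y = 0 in the max-variant. For any m ≥ 2 and θ, ℓ, r ∈ (0,1] with ⌈ℓm⌉ < ⌈rm⌉, on every instance with m groups all of equal size n/m, the social cost of the solution output by mechanism M_m(θ,ℓ,r) is at most max{ n/((m+1−⌈ℓm⌉)·(n/m + 1 − ⌈θn/m⌉)) − 1, n/((1+Y)·(m+1−⌈rm⌉)·(n/m + 1 − ⌈θn/m⌉)), n/(⌈rm⌉·⌈θn/m⌉) − 1, n/((1+Y)·⌈ℓm⌉·⌈θn/m⌉) } times the minimum social cost over all feasible solutions. -/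
open Finset

noncomputable section

/-- The approximation-ratio bound of Theorem 3 (`Y = 1` for the sum-variant,
`Y = 0` for the max-variant). -/
def approxBound (n m : ℕ) (θ l r Y : ℝ) : ℝ :=
  let N : ℝ := n
  let Mm : ℝ := m
  let g : ℝ := N / Mm
  let L : ℝ := ⌈l * Mm⌉₊
  let R : ℝ := ⌈r * Mm⌉₊
  let T : ℝ := ⌈θ * g⌉₊
  max (max (N / ((Mm + 1 - L) * (g + 1 - T)) - 1)
           (N / ((1 + Y) * (Mm + 1 - R) * (g + 1 - T))))
      (max (N / (R * T) - 1) (N / ((1 + Y) * L * T)))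

/-- At least `t` elements of a multiset are at most its `t`-th leftmost element. -/
lemma le_card_filter_le_kthLeftmost (S : Multiset ℝ) (t : ℕ) (ht : t ≤ Multiset.card S) :
    t ≤ Multiset.card (S.filter (· ≤ kthLeftmost S t)) := by
  rcases Nat.eq_zero_or_pos t with h0 | h1
  · omega
  set L := S.sort (· ≤ ·) with hL
  have hlen : L.length = Multiset.card S := Multiset.length_sort _
  have hsort : L.Pairwise (· ≤ ·) := Multiset.pairwise_sort S (· ≤ ·)
  have hv : kthLeftmost S t = L[t - 1]'(by omega) := by
    unfold kthLeftmost
    rw [← hL, List.getD_eq_getElem _ _ (by omega)]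
  have hsub : ((L.take t : List ℝ) : Multiset ℝ) ≤ S.filter (· ≤ kthLeftmost S t) := by
    refine Multiset.le_filter.2 ⟨?_, ?_⟩
    · calc ((L.take t : List ℝ) : Multiset ℝ) ≤ (L : Multiset ℝ) :=
            Multiset.coe_le.2 (List.take_sublist t L).subperm
        _ = S := Multiset.sort_eq S (· ≤ ·)
    · intro a ha
      obtain ⟨i, hi, rfl⟩ := List.mem_iff_getElem.1 (Multiset.mem_coe.1 ha)
      rw [List.length_take] at hi
      rw [hv, List.getElem_take]
      exact hsort.sortedLE.getElem_le_getElem_of_le (by omega)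
  have hcard := Multiset.card_le_card hsub
  rw [Multiset.coe_card, List.length_take] at hcard
  omega

/-- At least `|S| + 1 - t` elements of a multiset `S` are at least its `t`-th leftmost element. -/
lemma le_card_filter_kthLeftmost_le (S : Multiset ℝ) (t : ℕ) (h1 : 1 ≤ t)
    (ht : t ≤ Multiset.card S) :
    Multiset.card S + 1 - t ≤ Multiset.card (S.filter (kthLeftmost S t ≤ ·)) := by
  set L := S.sort (· ≤ ·) with hL
  have hlen : L.length = Multiset.card S := Multiset.length_sort _
  have hsort : L.Pairwise (· ≤ ·) := Multiset.pairwise_sort S (· ≤ ·)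
  have hv : kthLeftmost S t = L[t - 1]'(by omega) := by
    unfold kthLeftmost
    rw [← hL, List.getD_eq_getElem _ _ (by omega)]
  have hsub : ((L.drop (t - 1) : List ℝ) : Multiset ℝ) ≤
      S.filter (kthLeftmost S t ≤ ·) := by
    refine Multiset.le_filter.2 ⟨?_, ?_⟩
    · calc ((L.drop (t - 1) : List ℝ) : Multiset ℝ) ≤ (L : Multiset ℝ) :=
            Multiset.coe_le.2 (List.drop_sublist (t - 1) L).subperm
        _ = S := Multiset.sort_eq S (· ≤ ·)
    · intro a ha
      obtain ⟨i, hi, rfl⟩ := List.mem_iff_getElem.1 (Multiset.mem_coe.1 ha)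
      rw [List.length_drop] at hi
      rw [hv, List.getElem_drop]
      exact hsort.sortedLE.getElem_le_getElem_of_le (by omega)
  have hcard := Multiset.card_le_card hsub
  rw [Multiset.coe_card, List.length_drop] at hcard
  omega

lemma kthLeftmost_mono (S : Multiset ℝ) {s t : ℕ} (hst : s ≤ t) (h1 : 1 ≤ s)
    (ht : t ≤ Multiset.card S) : kthLeftmost S s ≤ kthLeftmost S t := by
  have hlen : (S.sort (· ≤ ·)).length = Multiset.card S := Multiset.length_sort _
  have hsort : (S.sort (· ≤ ·)).Pairwise (· ≤ ·) := Multiset.pairwise_sort S (· ≤ ·)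
  unfold kthLeftmost
  rw [List.getD_eq_getElem _ _ (by omega), List.getD_eq_getElem _ _ (by omega)]
  exact hsort.sortedLE.getElem_le_getElem_of_le (by omega)

/-- If at least `t` fibres of `f` each contain at least `c` elements satisfying `p`, then at least
`t * c` elements satisfy `p`. -/
lemma mul_le_card_filter_of_fibres {α β : Type*} [Fintype α] [Fintype β] [DecidableEq β]
    (f : α → β) (p : α → Prop) [DecidablePred p] (J : Finset β) (t c : ℕ) (hJ : t ≤ #J)
    (hc : ∀ j ∈ J, c ≤ #{i | f i = j ∧ p i}) : t * c ≤ #{i | p i} := by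
  calc t * c ≤ #J * c := Nat.mul_le_mul_right c hJ
    _ = ∑ _j ∈ J, c := by simp
    _ ≤ ∑ j ∈ J, #{i | f i = j ∧ p i} := Finset.sum_le_sum hc
    _ ≤ ∑ j, #{i | f i = j ∧ p i} :=
        Finset.sum_le_sum_of_subset (Finset.subset_univ J)
    _ = #{i | p i} := by
        rw [Finset.card_eq_sum_card_fiberwise (f := f) (t := Finset.univ) (fun _ _ => by simp)]
        refine Finset.sum_congr rfl fun j _ => ?_
        rw [Finset.filter_filter]
        simp only [and_comm]

lemma card_filter_map_val {α : Type*} (s : Finset α) (x : α → ℝ) (p : ℝ → Prop)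
    [DecidablePred p] :
    Multiset.card ((s.val.map x).filter p) = #{i ∈ s | p (x i)} := by
  rw [Multiset.filter_map, Multiset.card_map]
  rfl

section Counting

variable {m : ℕ} (S : FLSetting 2 m) (x : Fin S.n → ℝ) (θ l r : ℝ) (g : ℕ)

/-- The number of agents to the left of the `t`-th leftmost representative. -/
lemma card_agents_le (hg : ∀ j, groupSize S j = g) (hT : ⌈θ * (g : ℝ)⌉₊ ≤ g) (t : ℕ)
    (ht : t ≤ m) :
    t * ⌈θ * (g : ℝ)⌉₊ ≤ #{i | x i ≤ kthLeftmost (repsMS (Mmech θ l r) S x) t} := by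
  have hcard (j) : Multiset.card (groupMS S x j) = g := by
    rw [← hg j, groupMS, Multiset.card_map]; rfl
  have hR : Multiset.card (repsMS (Mmech θ l r) S x) = m := by simp [repsMS]
  have hJ := le_card_filter_le_kthLeftmost (repsMS (Mmech θ l r) S x) t (by omega)
  generalize kthLeftmost (repsMS (Mmech θ l r) S x) t = v at hJ ⊢
  rw [repsMS, card_filter_map_val] at hJ
  refine mul_le_card_filter_of_fibres S.grp _ _ _ _ hJ fun j hj => ?_
  have hjv : kthLeftmost (groupMS S x j) ⌈θ * (g : ℝ)⌉₊ ≤ v := by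
    have := (Finset.mem_filter.1 hj).2
    simpa [Mmech, hcard] using this
  have hj' := le_card_filter_le_kthLeftmost (groupMS S x j) ⌈θ * (g : ℝ)⌉₊ (by rw [hcard]; exact hT)
  rw [groupMS, card_filter_map_val, Finset.filter_filter] at hj'
  refine hj'.trans (Finset.card_le_card fun i hi => ?_)
  simp only [Finset.mem_filter, Finset.mem_univ, true_and] at hi ⊢
  exact ⟨hi.1, hi.2.trans hjv⟩

/-- The number of agents to the right of the `t`-th leftmost representative. -/
lemma card_agents_ge (hg : ∀ j, groupSize S j = g) (hT1 : 1 ≤ ⌈θ * (g : ℝ)⌉₊)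
    (hT : ⌈θ * (g : ℝ)⌉₊ ≤ g) (t : ℕ) (h1 : 1 ≤ t) (ht : t ≤ m) :
    (m + 1 - t) * (g + 1 - ⌈θ * (g : ℝ)⌉₊) ≤
      #{i | kthLeftmost (repsMS (Mmech θ l r) S x) t ≤ x i} := by
  have hcard (j) : Multiset.card (groupMS S x j) = g := by
    rw [← hg j, groupMS, Multiset.card_map]; rfl
  have hR : Multiset.card (repsMS (Mmech θ l r) S x) = m := by simp [repsMS]
  have hJ := le_card_filter_kthLeftmost_le (repsMS (Mmech θ l r) S x) t h1 (by omega)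
  rw [hR] at hJ
  generalize kthLeftmost (repsMS (Mmech θ l r) S x) t = v at hJ ⊢
  rw [repsMS, card_filter_map_val] at hJ
  refine mul_le_card_filter_of_fibres S.grp _ _ _ _ hJ fun j hj => ?_
  have hjv : v ≤ kthLeftmost (groupMS S x j) ⌈θ * (g : ℝ)⌉₊ := by
    have := (Finset.mem_filter.1 hj).2
    simpa [Mmech, hcard] using this
  have hj' := le_card_filter_kthLeftmost_le (groupMS S x j) ⌈θ * (g : ℝ)⌉₊ hT1
    (by rw [hcard]; exact hT)
  rw [hcard, groupMS, card_filter_map_val, Finset.filter_filter] at hj'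
  refine hj'.trans (Finset.card_le_card fun i hi => ?_)
  simp only [Finset.mem_filter, Finset.mem_univ, true_and] at hi ⊢
  exact ⟨hi.1, hjv.trans hi.2⟩

/-- With groups of equal size, the social cost is a multiple of the total individual cost. -/
lemma SC_eq_of_groupSize_eq (hg : ∀ j, groupSize S j = g) (cost : ℝ → (Fin 2 → ℝ) → ℝ)
    (y : Fin 2 → ℝ) :
    SC cost S x y = (1 / (m : ℝ)) * (1 / (g : ℝ)) * ∑ i, cost (x i) y := by
  unfold SC
  simp only [hg]
  rw [← Finset.mul_sum, Finset.sum_fiberwise, mul_assoc]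

end Counting

section Pointwise

variable {ι : Type*} [Fintype ι] (x : ι → ℝ) (B w₁ w₂ : ℝ)

/-- A pointwise comparison of `c` and `C`, in terms of the relative position of the agents to
`w₁` and `w₂`, gives a bound on the ratio of their sums. -/
lemma sum_le_mul_sum_of_pointwise (c C : ι → ℝ) (hB : 1 ≤ B)
    (hP₁ : (Fintype.card ι : ℝ) ≤ 2 * B * #{i | x i ≤ w₁})
    (hP₂ : (Fintype.card ι : ℝ) ≤ (B + 1) * #{i | x i ≤ w₂})
    (hQ₁ : (Fintype.card ι : ℝ) ≤ (B + 1) * #{i | w₁ ≤ x i})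
    (hQ₂ : (Fintype.card ι : ℝ) ≤ 2 * B * #{i | w₂ ≤ x i})
    (α₁ α₂ β₁ β₂ : ℝ) (hα₁ : 0 ≤ α₁) (hα₂ : 0 ≤ α₂) (hβ₁ : 0 ≤ β₁) (hβ₂ : 0 ≤ β₂)
    (hup : ∀ i, c i ≤ C i + α₁ * (1 - 2 * if x i ≤ w₁ then 1 else 0)
      + α₂ * (1 - 2 * if x i ≤ w₂ then 1 else 0) + β₁ * (1 - 2 * if w₁ ≤ x i then 1 else 0)
      + β₂ * (1 - 2 * if w₂ ≤ x i then 1 else 0))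
    (hlow : ∀ i, 2 * α₁ * (if x i ≤ w₁ then 1 else 0) + α₂ * (if x i ≤ w₂ then 1 else 0)
      + β₁ * (if w₁ ≤ x i then 1 else 0) + 2 * β₂ * (if w₂ ≤ x i then 1 else 0) ≤ C i) :
    ∑ i, c i ≤ B * ∑ i, C i := by
  have hup' := Finset.sum_le_sum fun i (_ : i ∈ Finset.univ) => hup i
  have hlow' := Finset.sum_le_sum fun i (_ : i ∈ Finset.univ) => hlow i
  simp only [Finset.sum_add_distrib, ← Finset.mul_sum, Finset.sum_sub_distrib, Finset.sum_boole,
    Finset.sum_const, Finset.card_univ, nsmul_eq_mul, mul_one] at hup' hlow'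
  have h := mul_le_mul_of_nonneg_left hlow' (sub_nonneg.2 hB)
  have h₁ := mul_le_mul_of_nonneg_left hP₁ hα₁
  have h₂ := mul_le_mul_of_nonneg_left hP₂ hα₂
  have h₃ := mul_le_mul_of_nonneg_left hQ₁ hβ₁
  have h₄ := mul_le_mul_of_nonneg_left hQ₂ hβ₂
  linarith

/-- The sum-variant comparison for facilities at `w₁ ≤ w₂` against facilities at `a ≤ b`. -/
lemma sum_abs_add_abs_le (hw : w₁ ≤ w₂) (hB : 1 ≤ B)
    (hP₁ : (Fintype.card ι : ℝ) ≤ 2 * B * #{i | x i ≤ w₁})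
    (hP₂ : (Fintype.card ι : ℝ) ≤ (B + 1) * #{i | x i ≤ w₂})
    (hQ₁ : (Fintype.card ι : ℝ) ≤ (B + 1) * #{i | w₁ ≤ x i})
    (hQ₂ : (Fintype.card ι : ℝ) ≤ 2 * B * #{i | w₂ ≤ x i}) (a b : ℝ) (hab : a ≤ b) :
    ∑ i, (|x i - w₁| + |x i - w₂|) ≤ B * ∑ i, (|x i - a| + |x i - b|) := by
  have key := sum_le_mul_sum_of_pointwise x B w₁ w₂ (fun i => |x i - w₁| + |x i - w₂|)
    (fun i => |x i - a| + |x i - b|) hB hP₁ hP₂ hQ₁ hQ₂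
  rcases le_total w₂ a with h2a | ha2
  · refine key (w₂ - w₁) ((a - w₂) + (b - w₂)) 0 0 (by linarith) (by linarith) le_rfl le_rfl ?_ ?_
      <;> intro i <;> clear key hP₁ hP₂ hQ₁ hQ₂ <;>
        generalize x i = t <;> split_ifs <;> grind
  rcases le_total b w₁ with hb1 | h1b
  · refine key 0 0 ((w₁ - a) + (w₁ - b)) (w₂ - w₁) le_rfl le_rfl (by linarith) (by linarith) ?_ ?_
      <;> intro i <;> clear key hP₁ hP₂ hQ₁ hQ₂ <;>
        generalize x i = t <;> split_ifs <;> grind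
  rcases le_total w₁ a with h1a | ha1 <;> rcases le_total w₂ b with h2b | hb2
  · refine key (a - w₁) (b - w₂) 0 0 (by linarith) (by linarith) le_rfl le_rfl ?_ ?_
      <;> intro i <;> clear key hP₁ hP₂ hQ₁ hQ₂ <;>
        generalize x i = t <;> split_ifs <;> grind
  · refine key (a - w₁) 0 0 (w₂ - b) (by linarith) le_rfl le_rfl (by linarith) ?_ ?_
      <;> intro i <;> clear key hP₁ hP₂ hQ₁ hQ₂ <;>
        generalize x i = t <;> split_ifs <;> grind
  · refine key 0 (b - w₂) (w₁ - a) 0 le_rfl (by linarith) (by linarith) le_rfl ?_ ?_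
      <;> intro i <;> clear key hP₁ hP₂ hQ₁ hQ₂ <;>
        generalize x i = t <;> split_ifs <;> grind
  · refine key 0 0 (w₁ - a) (w₂ - b) le_rfl le_rfl (by linarith) (by linarith) ?_ ?_
      <;> intro i <;> clear key hP₁ hP₂ hQ₁ hQ₂ <;>
        generalize x i = t <;> split_ifs <;> grind

/-- The max-variant comparison for facilities at `w₁ ≤ w₂` against a single facility at `a`. -/
lemma sum_max_abs_le (hw : w₁ ≤ w₂) (hB : 1 ≤ B)
    (hP : (Fintype.card ι : ℝ) ≤ B * #{i | x i ≤ w₁})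
    (hQ : (Fintype.card ι : ℝ) ≤ B * #{i | w₂ ≤ x i}) (a : ℝ) :
    ∑ i, max |x i - w₁| |x i - w₂| ≤ B * ∑ i, |x i - a| := by
  have key (α β : ℝ) (hα : 0 ≤ α) (hβ : 0 ≤ β)
      (hup : ∀ i, max |x i - w₁| |x i - w₂| ≤ |x i - a| + α * (1 - if x i ≤ w₁ then 1 else 0)
        + β * (1 - if w₂ ≤ x i then 1 else 0))
      (hlow : ∀ i, α * (if x i ≤ w₁ then 1 else 0) + β * (if w₂ ≤ x i then 1 else 0)
        ≤ |x i - a|) :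
      ∑ i, max |x i - w₁| |x i - w₂| ≤ B * ∑ i, |x i - a| := by
    have hup' := Finset.sum_le_sum fun i (_ : i ∈ Finset.univ) => hup i
    have hlow' := Finset.sum_le_sum fun i (_ : i ∈ Finset.univ) => hlow i
    simp only [Finset.sum_add_distrib, ← Finset.mul_sum, Finset.sum_sub_distrib, Finset.sum_boole,
      Finset.sum_const, Finset.card_univ, nsmul_eq_mul, mul_one] at hup' hlow'
    have h := mul_le_mul_of_nonneg_left hlow' (sub_nonneg.2 hB)
    have h₁ := mul_le_mul_of_nonneg_left hP hα
    have h₂ := mul_le_mul_of_nonneg_left hQ hβ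
    linarith
  rcases le_total w₂ a with h2a | ha2
  · refine key (a - w₁) 0 (by linarith) le_rfl ?_ ?_
      <;> intro i <;> clear key hP hQ <;> generalize x i = t <;> split_ifs <;> grind
  rcases le_total a w₁ with ha1 | h1a
  · refine key 0 (w₂ - a) le_rfl (by linarith) ?_ ?_
      <;> intro i <;> clear key hP hQ <;> generalize x i = t <;> split_ifs <;> grind
  · refine key (a - w₁) (w₂ - a) (by linarith) (by linarith) ?_ ?_
      <;> intro i <;> clear key hP hQ <;> generalize x i = t <;> split_ifs <;> grind

end Pointwise

lemma sumCost_two (a : ℝ) (y : Fin 2 → ℝ) : sumCost 2 a y = |a - y 0| + |a - y 1| := by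
  simp [sumCost, Fin.sum_univ_two]

lemma maxCost_two (a : ℝ) (y : Fin 2 → ℝ) : maxCost 2 a y = max |a - y 0| |a - y 1| := by
  have hbdd : BddAbove (Set.range fun i : Fin 2 => |a - y i|) := Set.finite_range _ |>.bddAbove
  refine le_antisymm (ciSup_le fun i => ?_) (max_le (le_ciSup hbdd 0) (le_ciSup hbdd 1))
  fin_cases i
  · exact le_max_left _ _
  · exact le_max_right _ _

lemma le_mul_of_div_le_of_le {N B p P : ℝ} (hp : 0 < p) (hB : 0 ≤ B) (h : N / p ≤ B)
    (hpP : p ≤ P) : N ≤ B * P :=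
  ((div_le_iff₀ hp).1 h).trans (mul_le_mul_of_nonneg_left hpP hB)

/-- On every instance with `m` groups of equal size `n/m`, the social cost of the output
of `M_m(θ,ℓ,r)` is at most
`max{ n/((m+1−⌈ℓm⌉)(n/m+1−⌈θn/m⌉)) − 1, n/((1+Y)(m+1−⌈rm⌉)(n/m+1−⌈θn/m⌉)),
  n/(⌈rm⌉⌈θn/m⌉) − 1, n/((1+Y)⌈ℓm⌉⌈θn/m⌉) }` times the optimal social cost,
where `Y = 1` in the sum-variant and `Y = 0` in the max-variant. -/
theorem stmt2 (m : ℕ) (hm : 2 ≤ m) (θ l r : ℝ)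
    (hθ : θ ∈ Set.Ioc (0 : ℝ) 1) (hl : l ∈ Set.Ioc (0 : ℝ) 1) (hr : r ∈ Set.Ioc (0 : ℝ) 1)
    (hlr : ⌈l * (m : ℝ)⌉₊ < ⌈r * (m : ℝ)⌉₊)
    (S : FLSetting 2 m) (hsym : ∀ j : Fin m, groupSize S j * m = S.n)
    (x : Fin S.n → ℝ) (y : Fin 2 → ℝ) (hy : Feasible S x y) :
    SC (sumCost 2) S x (outcome (Mmech θ l r) S x)
      ≤ approxBound S.n m θ l r 1 * SC (sumCost 2) S x y ∧
    SC (maxCost 2) S x (outcome (Mmech θ l r) S x)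
      ≤ approxBound S.n m θ l r 0 * SC (maxCost 2) S x y := by
  obtain ⟨hm0, hn0⟩ : (0 : ℝ) < m ∧ (0 : ℝ) < S.n :=
    ⟨by positivity, by exact_mod_cast (by have := S.hn; omega : 0 < S.n)⟩
  obtain ⟨g, hg⟩ : ∃ g, ∀ j, groupSize S j = g :=
    ⟨groupSize S ⟨0, by omega⟩, fun j => Nat.eq_of_mul_eq_mul_right (by omega : 0 < m)
      ((hsym j).trans (hsym _).symm)⟩
  have hgm : (g : ℝ) * m = S.n := by
    exact_mod_cast (hg ⟨0, by omega⟩) ▸ hsym ⟨0, by omega⟩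
  have hg0 : (0 : ℝ) < g := by
    by_contra h
    nlinarith
  have hgdiv : (S.n : ℝ) / m = g := by rw [← hgm]; field_simp
  have ceil_bounds (a : ℝ) (ha : a ∈ Set.Ioc (0 : ℝ) 1) (k : ℕ) (hk : (0 : ℝ) < k) :
      1 ≤ ⌈a * (k : ℝ)⌉₊ ∧ ⌈a * (k : ℝ)⌉₊ ≤ k :=
    ⟨Nat.ceil_pos.2 (mul_pos ha.1 hk), Nat.ceil_le.2 (by nlinarith [ha.2])⟩
  obtain ⟨hT1, hTg⟩ := ceil_bounds θ hθ g hg0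
  obtain ⟨hL1, hLm⟩ := ceil_bounds l hl m hm0
  obtain ⟨hR1, hRm⟩ := ceil_bounds r hr m hm0
  have hP₁ := card_agents_le S x θ l r g hg hTg _ hLm
  have hP₂ := card_agents_le S x θ l r g hg hTg _ hRm
  have hQ₁ := card_agents_ge S x θ l r g hg hT1 hTg _ hL1 hLm
  have hQ₂ := card_agents_ge S x θ l r g hg hT1 hTg _ hR1 hRm
  have hw : kthLeftmost (repsMS (Mmech θ l r) S x) ⌈l * (m : ℝ)⌉₊ ≤
      kthLeftmost (repsMS (Mmech θ l r) S x) ⌈r * (m : ℝ)⌉₊ :=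
    kthLeftmost_mono _ hlr.le hL1 (by simpa [repsMS] using hRm)
  have hout : outcome (Mmech θ l r) S x =
      ![kthLeftmost (repsMS (Mmech θ l r) S x) ⌈l * (m : ℝ)⌉₊,
        kthLeftmost (repsMS (Mmech θ l r) S x) ⌈r * (m : ℝ)⌉₊] := rfl
  rw [hout]
  simp only [SC_eq_of_groupSize_eq S x g hg, approxBound, hgdiv]
  generalize kthLeftmost (repsMS (Mmech θ l r) S x) ⌈l * (m : ℝ)⌉₊ = w₁ at *
  generalize kthLeftmost (repsMS (Mmech θ l r) S x) ⌈r * (m : ℝ)⌉₊ = w₂ at *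
  generalize ⌈l * (m : ℝ)⌉₊ = L at *
  generalize ⌈r * (m : ℝ)⌉₊ = R at *
  generalize ⌈θ * (g : ℝ)⌉₊ = T at *
  replace hP₁ : (L : ℝ) * T ≤ #{i | x i ≤ w₁} := by exact_mod_cast hP₁
  replace hP₂ : (R : ℝ) * T ≤ #{i | x i ≤ w₂} := by exact_mod_cast hP₂
  replace hQ₁ : ((m : ℝ) + 1 - L) * (g + 1 - T) ≤ #{i | w₁ ≤ x i} := by
    have := (Nat.cast_le (α := ℝ)).2 hQ₁
    rwa [Nat.cast_mul, Nat.cast_sub (by omega), Nat.cast_sub (by omega), Nat.cast_add,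
      Nat.cast_add, Nat.cast_one] at this
  replace hQ₂ : ((m : ℝ) + 1 - R) * (g + 1 - T) ≤ #{i | w₂ ≤ x i} := by
    have := (Nat.cast_le (α := ℝ)).2 hQ₂
    rwa [Nat.cast_mul, Nat.cast_sub (by omega), Nat.cast_sub (by omega), Nat.cast_add,
      Nat.cast_add, Nat.cast_one] at this
  have hLR : (L : ℝ) + 1 ≤ R := by exact_mod_cast hlr
  rify at hT1 hTg hL1 hLm hR1 hRm
  have hp₁ : (0 : ℝ) < L * T := by positivity
  have hp₂ : (0 : ℝ) < R * T := by positivity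
  have hq₁ : (0 : ℝ) < (m + 1 - L) * (g + 1 - T) := mul_pos (by linarith) (by linarith)
  have hq₂ : (0 : ℝ) < (m + 1 - R) * (g + 1 - T) := mul_pos (by linarith) (by linarith)
  have hpq : (L : ℝ) * T + (m + 1 - R) * (g + 1 - T) ≤ S.n := by
    have h₁ : (L : ℝ) * T ≤ L * g := by gcongr
    have h₂ : ((m : ℝ) + 1 - R) * (g + 1 - T) ≤ (m - L) * g :=
      mul_le_mul (by linarith) (by linarith) (by linarith) (by linarith)
    nlinarith
  have scale (A B C : ℝ) (h : A ≤ B * C) :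
      1 / (m : ℝ) * (1 / g) * A ≤ B * (1 / (m : ℝ) * (1 / g) * C) := by
    have := mul_le_mul_of_nonneg_left h (by positivity : (0 : ℝ) ≤ 1 / (m : ℝ) * (1 / g))
    linarith
  constructor
  · refine scale _ _ _ ?_
    obtain ⟨B, hBdef⟩ : ∃ B, B = max
      (max ((S.n : ℝ) / ((m + 1 - L) * (g + 1 - T)) - 1)
        ((S.n : ℝ) / ((1 + 1) * (m + 1 - R) * (g + 1 - T))))
      (max ((S.n : ℝ) / (R * T) - 1) ((S.n : ℝ) / ((1 + 1) * L * T))) := ⟨_, rfl⟩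
    obtain ⟨⟨hB₁, hB₂⟩, hB₃, hB₄⟩ := by simpa only [max_le_iff] using hBdef.ge
    rw [← hBdef]
    rw [mul_assoc] at hB₂ hB₄
    have hB : 1 ≤ B := by
      rw [div_le_iff₀ (by positivity)] at hB₂ hB₄
      nlinarith
    have hB0 : 0 ≤ B := by linarith
    simp only [sumCost_two, Matrix.cons_val_zero, Matrix.cons_val_one]
    have key := sum_abs_add_abs_le x B w₁ w₂ hw hB
      (by rw [Fintype.card_fin]
          linarith [le_mul_of_div_le_of_le (by positivity) hB0 hB₄
            (mul_le_mul_of_nonneg_left hP₁ (by norm_num))])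
      (by rw [Fintype.card_fin]
          exact le_mul_of_div_le_of_le hp₂ (by linarith) (by linarith) hP₂)
      (by rw [Fintype.card_fin]
          exact le_mul_of_div_le_of_le hq₁ (by linarith) (by linarith) hQ₁)
      (by rw [Fintype.card_fin]
          linarith [le_mul_of_div_le_of_le (by positivity) hB0 hB₂
            (mul_le_mul_of_nonneg_left hQ₂ (by norm_num))])
    rcases le_total (y 0) (y 1) with h | h
    · exact key _ _ h
    · simpa only [add_comm |_ - y 1|] using key _ _ h
  · refine scale _ _ _ ?_
    obtain ⟨B, hBdef⟩ : ∃ B, B = max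
      (max ((S.n : ℝ) / ((m + 1 - L) * (g + 1 - T)) - 1)
        ((S.n : ℝ) / ((1 + 0) * (m + 1 - R) * (g + 1 - T))))
      (max ((S.n : ℝ) / (R * T) - 1) ((S.n : ℝ) / ((1 + 0) * L * T))) := ⟨_, rfl⟩
    obtain ⟨⟨-, hB₂⟩, -, hB₄⟩ := by simpa only [max_le_iff] using hBdef.ge
    rw [← hBdef]
    rw [add_zero, one_mul] at hB₂ hB₄
    have hB : 1 ≤ B := by
      refine le_trans ?_ hB₄
      rw [le_div_iff₀ hp₁]
      linarith
    have hB0 : 0 ≤ B := by linarith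
    simp only [maxCost_two, Matrix.cons_val_zero, Matrix.cons_val_one]
    refine (sum_max_abs_le x B w₁ w₂ hw hB
      (by rw [Fintype.card_fin]; exact le_mul_of_div_le_of_le hp₁ hB0 hB₄ hP₁)
      (by rw [Fintype.card_fin]; exact le_mul_of_div_le_of_le hq₂ hB0 hB₂ hQ₂) (y 0)).trans ?_
    gcongr
    exact le_max_left _ _

end
end

section
/- In the sum-variant with k = 2 facilities, for every two-phase mechanism (not necessarily strategyproof) and every ε > 0, there exists an instance on which the social cost of the mechanism's output is at least (1 + √2 − ε) times the minimum social cost over all feasible solutions. -/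
open Finset

noncomputable section

/-- The setting with `K` groups of `K` agents each. -/
def squareSetting (K : ℕ) (hK : 2 ≤ K) : FLSetting 2 K where
  n := K * K
  hn := by nlinarith
  hmk := hK
  grp := fun i => (finProdFinEquiv.symm i).1
  surj := fun j => ⟨finProdFinEquiv (j, ⟨0, by omega⟩), by simp⟩

/-- Agents of the square setting, indexed by their group and their place within it. -/
def squareAgent (K : ℕ) (hK : 2 ≤ K) : Fin K × Fin K ≃ Fin (squareSetting K hK).n :=
  finProdFinEquiv

lemma grp_squareAgent (K : ℕ) (hK : 2 ≤ K) (u : Fin K × Fin K) :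
    (squareSetting K hK).grp (squareAgent K hK u) = u.1 := by
  change (finProdFinEquiv.symm (finProdFinEquiv u)).1 = u.1
  rw [Equiv.symm_apply_apply]

/-- The position profile in which the first `z` agents of a block of `K` agents are at `p` and
the remaining ones at `r`. -/
def blockPos (p r : ℝ) {K : ℕ} (z : ℕ) (b : Fin K) : ℝ := if b.val < z then p else r

/-- The multiset of positions of a block of `K` agents of which `z` are at `p`, the rest at `r`. -/
def block (p r : ℝ) (K z : ℕ) : Multiset ℝ :=
  (Finset.univ : Finset (Fin K)).val.map (blockPos p r z)

/-- Positions in the square setting: group `g` has `z g` agents at `p` and the rest at `r`. -/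
def squarePos (p r : ℝ) (K : ℕ) (hK : 2 ≤ K) (z : Fin K → ℕ)
    (i : Fin (squareSetting K hK).n) : ℝ :=
  blockPos p r (z ((squareAgent K hK).symm i).1) ((squareAgent K hK).symm i).2

lemma squareSetting_filter (K : ℕ) (hK : 2 ≤ K) (j : Fin K) :
    (Finset.univ.filter fun i => (squareSetting K hK).grp i = j) =
      (Finset.univ : Finset (Fin K)).map
        ((Function.Embedding.sectR j (Fin K)).trans (squareAgent K hK).toEmbedding) := by
  ext i
  obtain ⟨⟨g, b⟩, rfl⟩ := (squareAgent K hK).surjective i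
  simp [grp_squareAgent, eq_comm]

lemma groupSize_squareSetting (K : ℕ) (hK : 2 ≤ K) (j : Fin K) :
    groupSize (squareSetting K hK) j = K := by
  rw [groupSize, squareSetting_filter]
  simp

lemma groupMS_squareSetting (p r : ℝ) (K : ℕ) (hK : 2 ≤ K) (z : Fin K → ℕ) (j : Fin K) :
    groupMS (squareSetting K hK) (squarePos p r K hK z) j = block p r K (z j) := by
  unfold groupMS
  rw [squareSetting_filter, Finset.map_val, Multiset.map_map]
  refine Multiset.map_congr rfl fun b _ => ?_
  simp [squarePos]

lemma sum_blockPos (p r : ℝ) {K z : ℕ} (hz : z ≤ K) (f : ℝ → ℝ) :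
    ∑ b : Fin K, f (blockPos p r z b) = z * f p + (K - z) * f r := by
  simp only [blockPos]
  rw [Fin.sum_univ_eq_sum_range (fun b => f (if b < z then p else r)) K,
    ← Finset.sum_range_add_sum_Ico _ hz,
    Finset.sum_congr (s₁ := Finset.range z) (g := fun _ => f p) rfl
      (fun b hb => by rw [if_pos (Finset.mem_range.1 hb)]),
    Finset.sum_congr (s₁ := Finset.Ico z K) (g := fun _ => f r) rfl
      (fun b hb => by rw [if_neg (not_lt.2 (Finset.mem_Ico.1 hb).1)])]
  simp [Nat.cast_sub hz]

lemma SC_squareSetting (p r : ℝ) (K : ℕ) (hK : 2 ≤ K) (z : Fin K → ℕ) (hz : ∀ g, z g ≤ K)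
    (cost : ℝ → (Fin 2 → ℝ) → ℝ) (y : Fin 2 → ℝ) :
    SC cost (squareSetting K hK) (squarePos p r K hK z) y =
      (∑ g, (z g : ℝ)) / K ^ 2 * cost p y + (1 - (∑ g, (z g : ℝ)) / K ^ 2) * cost r y := by
  have hK0 : (K : ℝ) ≠ 0 := by positivity
  have key : ∀ j : Fin K,
      ∑ i ∈ Finset.univ.filter (fun i => (squareSetting K hK).grp i = j),
        cost (squarePos p r K hK z i) y = z j * cost p y + (K - z j) * cost r y := by
    intro j
    rw [squareSetting_filter, Finset.sum_map, ← sum_blockPos p r (hz j) (fun a => cost a y)]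
    simp [squarePos]
  simp only [SC, groupSize_squareSetting]
  rw [Finset.sum_congr rfl fun j _ => by rw [key j], ← Finset.mul_sum, Finset.sum_add_distrib,
    ← Finset.sum_mul, ← Finset.sum_mul, Finset.sum_sub_distrib]
  simp
  field_simp

lemma sum_ite_lt {K a : ℕ} (ha : a ≤ K) (s t : ℕ) :
    ∑ g : Fin K, (((if g.val < a then s else t : ℕ)) : ℝ) = a * s + (K - a) * t := by
  rw [← id_eq (s : ℝ), ← id_eq (t : ℝ), ← sum_blockPos (s : ℝ) (t : ℝ) ha id]
  refine Finset.sum_congr rfl fun g _ => ?_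
  simp [blockPos]

lemma feasible_squarePos_mem (p r : ℝ) (K : ℕ) (hK : 2 ≤ K) (z : Fin K → ℕ) (y : Fin 2 → ℝ)
    (hy : Feasible (squareSetting K hK) (squarePos p r K hK z) y) (l : Fin 2) :
    y l = p ∨ y l = r := by
  obtain ⟨f, -, hf⟩ := hy
  rw [hf l]
  unfold squarePos blockPos
  split_ifs <;> simp

/-- Two agents of the same group at location `w` allow both facilities to be opened at `w`. -/
lemma feasible_const (p r : ℝ) (K : ℕ) (hK : 2 ≤ K) (z : Fin K → ℕ) (w : ℝ) (g b b' : Fin K)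
    (hbb : b ≠ b') (hb : blockPos p r (z g) b = w) (hb' : blockPos p r (z g) b' = w) :
    Feasible (squareSetting K hK) (squarePos p r K hK z) (fun _ => w) := by
  refine ⟨![squareAgent K hK (g, b), squareAgent K hK (g, b')], ?_, ?_⟩
  · intro i j
    fin_cases i <;> fin_cases j <;> simp [hbb, hbb.symm]
  · intro l
    fin_cases l <;> simp [squarePos, hb, hb']

lemma mem_block {p r : ℝ} {K z : ℕ} {w : ℝ} (h : w ∈ block p r K z) : w = p ∨ w = r := by
  obtain ⟨b, -, rfl⟩ := Multiset.mem_map.1 h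
  unfold blockPos
  split_ifs <;> simp

lemma block_ne_zero (p r : ℝ) {K : ℕ} (hK : 2 ≤ K) (z : ℕ) : block p r K z ≠ 0 := by
  rw [← Multiset.card_pos]
  simp [block]
  omega

lemma eq_of_mem_block_zero {p r : ℝ} {K : ℕ} {w : ℝ} (h : w ∈ block p r K 0) : w = r := by
  obtain ⟨b, -, rfl⟩ := Multiset.mem_map.1 h
  simp [blockPos]

lemma eq_of_mem_block_self {p r : ℝ} {K : ℕ} {w : ℝ} (h : w ∈ block p r K K) : w = p := by
  obtain ⟨b, -, rfl⟩ := Multiset.mem_map.1 h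
  simp [blockPos]

lemma block_half_comm (p r : ℝ) (q : ℕ) : block r p (2 * q) q = block p r (2 * q) q := by
  unfold block
  conv_rhs => rw [← Multiset.map_univ_val_equiv (Fin.revPerm (n := 2 * q)), Multiset.map_map]
  refine Multiset.map_congr rfl fun b _ => ?_
  have hb := b.isLt
  simp only [blockPos, Function.comp, Fin.revPerm_apply, Fin.val_rev]
  split_ifs <;> first | rfl | omega

lemma repsMS_squareSetting (M : TwoPhase 2) (p r : ℝ) (K : ℕ) (hK : 2 ≤ K) (a s t : ℕ)
    (hs : M.rep K (block p r K s) = p) (ht : M.rep K (block p r K t) = r) :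
    repsMS M (squareSetting K hK) (squarePos p r K hK fun g => if g.val < a then s else t) =
      block p r K a := by
  refine Multiset.map_congr rfl fun g _ => ?_
  rw [groupMS_squareSetting, blockPos]
  split_ifs <;> assumption

lemma sel_block_mem {M : TwoPhase 2} (hM : M.Valid) (p r : ℝ) {K : ℕ} (hK : 2 ≤ K) (a : ℕ)
    (l : Fin 2) : M.sel K (block p r K a) l = p ∨ M.sel K (block p r K a) l = r := by
  refine mem_block (K := K) (z := a)
    (Multiset.mem_of_le (hM.2 K (block p r K a) (by simp [block]) hK) ?_)
  rw [Multiset.mem_coe, List.mem_ofFn]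
  exact ⟨l, rfl⟩

/-- The threshold number of agents at `p` at which the representative of a block changes
from `r` to `p`. -/
lemma exists_threshold {M : TwoPhase 2} (hM : M.Valid) {p r : ℝ} (hpr : p ≠ r) {K q : ℕ}
    (hK : 2 ≤ K) (hq : M.rep K (block p r K q) = p) :
    ∃ t, t + 1 ≤ q ∧ M.rep K (block p r K (t + 1)) = p ∧ M.rep K (block p r K t) = r := by
  classical
  have hex : ∃ t, M.rep K (block p r K t) = p := ⟨q, hq⟩
  have hmem : ∀ z, M.rep K (block p r K z) ∈ block p r K z := fun z =>
    hM.1 K _ (block_ne_zero p r hK z)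
  rcases hn : Nat.find hex with _ | t
  · have h := Nat.find_spec hex
    rw [hn, eq_of_mem_block_zero (hmem 0)] at h
    exact absurd h.symm hpr
  · refine ⟨t, hn ▸ Nat.find_min' hex hq, hn ▸ Nat.find_spec hex, ?_⟩
    exact (mem_block (hmem t)).resolve_left (Nat.find_min hex (by omega))

/-- The number of groups represented at `p` can be chosen so that both adversarial instances
are bad: with `a` groups at the threshold, at most a `1 - √2/2` fraction of the agents is at `p`,
while with the remaining groups just below it, the fraction at `r` is about `(√2 - 1)/2`. -/
lemma exists_group_count {K t : ℕ} (hK : 12 ≤ K) (htK : 2 * (t + 1) ≤ K) :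
    ∃ a : ℕ, 1 ≤ a ∧ a ≤ K ∧ (a * (t + 1) : ℝ) / K ^ 2 ≤ 1 - √2 / 2 ∧
      ((K - a) * (K - t) : ℝ) / K ^ 2 ≤ (√2 - 1) / 2 + 3 / K := by
  have hs2 : √2 ^ 2 = 2 := Real.sq_sqrt (by norm_num)
  have hs1 : (1.41 : ℝ) ≤ √2 := Real.le_sqrt_of_sq_le (by norm_num)
  have hs3 : √2 ≤ 1.42 := Real.sqrt_le_iff.2 (by norm_num)
  have hKr : (12 : ℝ) ≤ K := by exact_mod_cast hK
  have htr : 2 * ((t : ℝ) + 1) ≤ K := by exact_mod_cast htK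
  have ht0 : (0 : ℝ) ≤ t := by positivity
  set θ : ℝ := (t + 1) / K with hθ
  have hθ0 : 0 < θ := by positivity
  have hθ2 : θ ≤ 1 / 2 := by rw [hθ, div_le_iff₀ (by positivity)]; linarith
  have hteq : (t : ℝ) + 1 = θ * K := by rw [hθ]; field_simp
  set c : ℝ := 1 - √2 / 2 with hc
  have hc0 : 0 < c := by linarith
  set w : ℝ := c / θ with hw
  have hw0 : 0 < w := by positivity
  have hwθ : w * θ = c := by rw [hw]; field_simp
  have hcw : c ≤ w := by nlinarith
  have hbound : (1 - w) * (1 - θ) ≤ (√2 - 1) / 2 := by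
    have h1 : 0 ≤ (1 / 2 - θ) * (2 * c - θ) := mul_nonneg (by linarith) (by linarith)
    have h2 : 0 ≤ θ * (θ + w - (5 / 2 - √2)) := by nlinarith
    have h3 := nonneg_of_mul_nonneg_right h2 hθ0
    nlinarith
  have hfl := Nat.floor_le (a := w * K) (by positivity)
  have hfl' := Nat.lt_floor_add_one (w * K)
  have hfl1 : 1 ≤ ⌊w * (K : ℝ)⌋₊ := Nat.le_floor (by push_cast; nlinarith)
  rcases le_total ⌊w * (K : ℝ)⌋₊ K with h | h
  · refine ⟨⌊w * (K : ℝ)⌋₊, hfl1, h, ?_, ?_⟩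
    · rw [div_le_iff₀ (by positivity), hteq, ← hwθ]
      nlinarith [mul_le_mul_of_nonneg_right hfl (show 0 ≤ θ * K by positivity)]
    · have hle : (⌊w * (K : ℝ)⌋₊ : ℝ) ≤ K := by exact_mod_cast h
      have hx : (K : ℝ) - ⌊w * (K : ℝ)⌋₊ ≤ K * (1 - w) + 1 := by linarith
      have hy : (K : ℝ) - t = K * (1 - θ) + 1 := by linarith
      have hprod : ((K : ℝ) - ⌊w * (K : ℝ)⌋₊) * (K - t) ≤
          (K * (1 - w) + 1) * (K * (1 - θ) + 1) := by
        rw [hy]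
        exact mul_le_mul_of_nonneg_right hx (by nlinarith)
      rw [div_le_iff₀ (by positivity)]
      have hexp : ((√2 - 1) / 2 + 3 / K) * (K : ℝ) ^ 2 = (√2 - 1) / 2 * K ^ 2 + 3 * K := by
        field_simp
      rw [hexp]
      have := mul_le_mul_of_nonneg_right hbound (sq_nonneg (K : ℝ))
      nlinarith [mul_pos hw0 (show (0 : ℝ) < K by linarith),
        mul_pos hθ0 (show (0 : ℝ) < K by linarith)]
  · refine ⟨K, by omega, le_rfl, ?_, ?_⟩
    · have hle : (K : ℝ) ≤ w * K := le_trans (by exact_mod_cast h) hfl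
      rw [div_le_iff₀ (by positivity), hteq, ← hwθ]
      nlinarith [mul_le_mul_of_nonneg_right hle (show 0 ≤ θ * K by positivity)]
    · rw [sub_self, zero_mul, zero_div]
      have : (0 : ℝ) ≤ 3 / K := by positivity
      linarith

/-- Two-location cost: with `|p - r| = 1` and a fraction `P` of the agents at `p`, if `w` is the
better location then opening both facilities there is optimal in the square setting. -/
lemma SC_const_le_of_feasible {p r : ℝ} (hpr : |p - r| = 1) {K : ℕ} (hK : 2 ≤ K)
    (z : Fin K → ℕ) (hz : ∀ g, z g ≤ K) (w : ℝ)
    (hw : (w = p ∧ 1 / 2 ≤ (∑ g, (z g : ℝ)) / K ^ 2) ∨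
      (w = r ∧ (∑ g, (z g : ℝ)) / K ^ 2 ≤ 1 / 2))
    (y : Fin 2 → ℝ) (hy : Feasible (squareSetting K hK) (squarePos p r K hK z) y) :
    SC (sumCost 2) (squareSetting K hK) (squarePos p r K hK z) (fun _ => w) ≤
      SC (sumCost 2) (squareSetting K hK) (squarePos p r K hK z) y := by
  have hrp : |r - p| = 1 := abs_sub_comm p r ▸ hpr
  rw [SC_squareSetting p r K hK z hz, SC_squareSetting p r K hK z hz]
  simp only [sumCost, Fin.sum_univ_two]
  rcases feasible_squarePos_mem p r K hK z y hy 0 with h0 | h0 <;>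
  rcases feasible_squarePos_mem p r K hK z y hy 1 with h1 | h1 <;>
  rcases hw with ⟨rfl, hP⟩ | ⟨rfl, hP⟩ <;>
  simp only [h0, h1, hpr, hrp, sub_self, abs_zero] <;> linarith

/-- The lower bound when the balanced block is represented at `p`. -/
lemma exists_bad_instance {M : TwoPhase 2} (hM : M.Valid) {ε : ℝ} (hε : 0 < ε) {p r : ℝ}
    (hpr : |p - r| = 1) {q : ℕ} (hq20 : 20 ≤ q) (hqε : 100 ≤ ε * q)
    (hq : M.rep (2 * q) (block p r (2 * q) q) = p) :
    ∃ (m : ℕ) (S : FLSetting 2 m) (x : Fin S.n → ℝ) (yopt : Fin 2 → ℝ),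
      Feasible S x yopt ∧
      (∀ y : Fin 2 → ℝ, Feasible S x y → SC (sumCost 2) S x yopt ≤ SC (sumCost 2) S x y) ∧
      (1 + √2 - ε) * SC (sumCost 2) S x yopt ≤ SC (sumCost 2) S x (outcome M S x) := by
  have hs2 : √2 ^ 2 = 2 := Real.sq_sqrt (by norm_num)
  have hs1 : (1.41 : ℝ) ≤ √2 := Real.le_sqrt_of_sq_le (by norm_num)
  have hs3 : √2 ≤ 1.42 := Real.sqrt_le_iff.2 (by norm_num)
  have hrp : |r - p| = 1 := abs_sub_comm p r ▸ hpr
  have hne : p ≠ r := by rintro rfl; simp at hpr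
  obtain ⟨K, hKq⟩ : ∃ K, K = 2 * q := ⟨_, rfl⟩
  rw [← hKq] at hq
  have hK : 2 ≤ K := by omega
  have hKr : (K : ℝ) = 2 * q := by exact_mod_cast hKq
  have hq20r : (20 : ℝ) ≤ q := by exact_mod_cast hq20
  obtain ⟨t, htq, htp, htr⟩ := exists_threshold hM hne hK hq
  obtain ⟨a, ha1, haK, hu, hv⟩ := exists_group_count (K := K) (t := t) (by omega) (by omega)
  have hrep0 : M.rep K (block p r K 0) = r :=
    eq_of_mem_block_zero (hM.1 K _ (block_ne_zero p r hK 0))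
  have hrepK : M.rep K (block p r K K) = p :=
    eq_of_mem_block_self (hM.1 K _ (block_ne_zero p r hK K))
  by_cases hsel : ∀ l, M.sel K (block p r K a) l = p
  · -- Both facilities are opened at `p`, although both should be at `r`.
    set z : Fin K → ℕ := fun g => if g.val < a then t + 1 else 0 with hzdef
    have hz : ∀ g, z g ≤ K := fun g => by simp only [hzdef]; split_ifs <;> omega
    have hP : (∑ g, (z g : ℝ)) / K ^ 2 ≤ 1 - √2 / 2 := by
      rw [sum_ite_lt haK]
      push_cast
      simpa using hu
    have hP0 : 0 ≤ (∑ g, (z g : ℝ)) / K ^ 2 := by positivity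
    refine ⟨K, squareSetting K hK, squarePos p r K hK z, fun _ => r, ?_, ?_, ?_⟩
    · refine feasible_const p r K hK z r ⟨0, by omega⟩ ⟨q, by omega⟩ ⟨q + 1, by omega⟩
        (by simp) ?_ ?_ <;>
      · simp only [blockPos, hzdef]
        split_ifs <;> first | rfl | omega
    · exact SC_const_le_of_feasible hpr hK z hz r (Or.inr ⟨rfl, by linarith⟩)
    · unfold outcome
      rw [repsMS_squareSetting M p r K hK a _ _ htp hrep0,
        SC_squareSetting p r K hK z hz, SC_squareSetting p r K hK z hz]
      simp only [sumCost, Fin.sum_univ_two, hsel, hpr, hrp, sub_self, abs_zero]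
      nlinarith [mul_nonneg hε.le hP0]
  · -- Some facility is opened at `r`, although both should be at `p`.
    push Not at hsel
    obtain ⟨l₀, hl₀⟩ := hsel
    set z : Fin K → ℕ := fun g => if g.val < a then K else t with hzdef
    have hz : ∀ g, z g ≤ K := fun g => by simp only [hzdef]; split_ifs <;> omega
    have hPeq : 1 - (∑ g, (z g : ℝ)) / K ^ 2 = ((K - a) * (K - t) : ℝ) / K ^ 2 := by
      rw [sum_ite_lt haK]
      have : (K : ℝ) ≠ 0 := by positivity
      field_simp
      ring
    rw [← hPeq] at hv
    have hv0 : 0 ≤ 1 - (∑ g, (z g : ℝ)) / K ^ 2 := by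
      have h1 : (a : ℝ) ≤ K := by exact_mod_cast haK
      have h2 : (t : ℝ) ≤ K := by exact_mod_cast (by omega : t ≤ K)
      rw [hPeq]
      exact div_nonneg (mul_nonneg (by linarith) (by linarith)) (by positivity)
    have hδ : 3 / (K : ℝ) ≤ 0.1 := by
      rw [div_le_iff₀ (by linarith)]
      linarith
    have hδε : 3 / (K : ℝ) ≤ 0.03 * ε := by
      rw [div_le_iff₀ (by linarith), hKr]
      linarith
    have hδ0 : 0 ≤ 3 / (K : ℝ) := by positivity
    refine ⟨K, squareSetting K hK, squarePos p r K hK z, fun _ => p, ?_, ?_, ?_⟩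
    · refine feasible_const p r K hK z p ⟨0, by omega⟩ ⟨0, by omega⟩ ⟨1, by omega⟩
        (by simp) ?_ ?_ <;>
      · simp only [blockPos, hzdef]
        split_ifs <;> first | rfl | omega
    · exact SC_const_le_of_feasible hpr hK z hz p (Or.inl ⟨rfl, by linarith⟩)
    · unfold outcome
      rw [repsMS_squareSetting M p r K hK a _ _ hrepK htr,
        SC_squareSetting p r K hK z hz, SC_squareSetting p r K hK z hz]
      generalize (∑ g, (z g : ℝ)) / K ^ 2 = P at *
      generalize 3 / (K : ℝ) = δ at *
      have hmain : (1 + √2 - ε) * (2 * (1 - P)) ≤ 1 := by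
        rcases le_total (1 + √2 - ε) 0 with h | h
        · nlinarith
        · nlinarith [mul_le_mul_of_nonneg_left hv h, mul_nonneg hε.le hδ0]
      have hle : (1 : ℝ) ≤ 2 * P := by linarith
      have h0 := sel_block_mem hM p r hK a 0
      have h1 := sel_block_mem hM p r hK a 1
      simp only [sumCost, Fin.sum_univ_two, hrp, sub_self, abs_zero]
      rcases h0 with h0 | h0 <;> rcases h1 with h1 | h1
      · exact absurd (by fin_cases l₀ <;> assumption) hl₀
      all_goals
        simp only [h0, h1, hpr, hrp, sub_self, abs_zero]
        linarith

/-- In the sum-variant with two facilities, for every (valid) two-phase mechanism and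
every `ε > 0`, there is an instance on which the output's social cost is at least
`(1 + √2 − ε)` times the minimum social cost over all feasible solutions. -/
theorem stmt7 (M : TwoPhase 2) (hM : M.Valid) (ε : ℝ) (hε : 0 < ε) :
    ∃ (m : ℕ) (S : FLSetting 2 m) (x : Fin S.n → ℝ) (yopt : Fin 2 → ℝ),
      Feasible S x yopt ∧
      (∀ y : Fin 2 → ℝ, Feasible S x y → SC (sumCost 2) S x yopt ≤ SC (sumCost 2) S x y) ∧
      (1 + Real.sqrt 2 - ε) * SC (sumCost 2) S x yopt
        ≤ SC (sumCost 2) S x (outcome M S x) := by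
  obtain ⟨q, hq⟩ := exists_nat_ge (max 20 (100 / ε))
  have hq20 : 20 ≤ q := by exact_mod_cast (le_max_left _ _).trans hq
  have hqε : 100 ≤ ε * q := by
    have := (div_le_iff₀ hε).1 ((le_max_right _ _).trans hq)
    linarith
  rcases mem_block (hM.1 (2 * q) _ (block_ne_zero 0 1 (show 2 ≤ 2 * q by omega) q)) with h | h
  · exact exists_bad_instance hM hε (by simp) hq20 hqε h
  · rw [← block_half_comm] at h
    exact exists_bad_instance hM hε (by simp) hq20 hqε h

end
end
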